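/- arXiv:2302.07098 — 5 statements merged into one kernel-verified Lean document; each statement's English description precedes it below -/
import Mathlib

section
/- Let β ∈ ℝ be such that β/π is irrational, let α ∈ ℝ, and let k be a nonnegative integer. Then lim_{N→∞} (1/N^{k+1}) Σ_{n=1}^{N} n^k cos(α n + β n²) = 0 and lim_{N→∞} (1/N^{k+1}) Σ_{n=1}^{N} n^k sin(α n + β n²) = 0. -/
open Filter Finset

/-- quadratic phase, shifted by one -/
noncomputable def chirpU (α β : ℝ) (n : ℕ) : ℂ :=
  Complex.exp (((α * ((n : ℝ) + 1) + β * ((n : ℝ) + 1) ^ 2 : ℝ) : ℂ) * Complex.I)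

lemma chirpU_norm (α β : ℝ) (n : ℕ) : ‖chirpU α β n‖ = 1 :=
  Complex.norm_exp_ofReal_mul_I _

lemma chirp_ne_one (β : ℝ) (hβ : Irrational (β / Real.pi)) (h h' : ℕ) (hh : h ≠ h') :
    Complex.exp (((2 * β * ((h : ℝ) - h') : ℝ) : ℂ) * Complex.I) ≠ 1 := by
  intro he
  rw [Complex.exp_eq_one_iff] at he
  obtain ⟨m, hm⟩ := he
  have hd : ((h : ℝ) - h') ≠ 0 := by
    rw [sub_ne_zero]; exact_mod_cast hh
  have h1 : 2 * β * ((h : ℝ) - h') = m * (2 * Real.pi) := by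
    have := congrArg Complex.im hm
    simpa using this
  apply hβ
  refine ⟨(m : ℚ) / ((h : ℚ) - h'), ?_⟩
  push_cast
  rw [div_eq_div_iff hd Real.pi_ne_zero]
  linarith

lemma geom_bound (w : ℂ) (hw : ‖w‖ = 1) (hw1 : w ≠ 1) (N : ℕ) :
    ‖∑ n ∈ range N, w ^ n‖ ≤ 2 / ‖w - 1‖ := by
  rw [geom_sum_eq hw1, norm_div]
  gcongr
  calc ‖w ^ N - 1‖ ≤ ‖w ^ N‖ + ‖(1 : ℂ)‖ := norm_sub_le _ _
    _ = 2 := by rw [norm_pow, hw]; norm_num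

lemma chirp_corr (α β : ℝ) (h h' n : ℕ) :
    chirpU α β (n + h) * (starRingEnd ℂ) (chirpU α β (n + h')) =
      (chirpU α β h * (starRingEnd ℂ) (chirpU α β h')) *
      Complex.exp (((2 * β * ((h : ℝ) - h') : ℝ) : ℂ) * Complex.I) ^ n := by
  unfold chirpU
  rw [← Complex.exp_nat_mul, ← Complex.exp_conj, ← Complex.exp_conj, ← Complex.exp_add,
    ← Complex.exp_add, ← Complex.exp_add]
  congr 1
  simp only [map_mul, Complex.conj_ofReal, Complex.conj_I]
  push_cast
  ring

lemma corr_bound (α β : ℝ) (hβ : Irrational (β / Real.pi)) (h h' : ℕ) :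
    ∃ C : ℝ, 0 ≤ C ∧ ∀ N : ℕ,
      ‖∑ n ∈ range N, chirpU α β (n + h) * (starRingEnd ℂ) (chirpU α β (n + h'))‖
        ≤ (if h = h' then (N : ℝ) else 0) + C := by
  by_cases hh : h = h'
  · refine ⟨0, le_rfl, fun N => ?_⟩
    simp only [hh, if_true, add_zero]
    refine (norm_sum_le _ _).trans ?_
    simp [chirpU_norm]
  · refine ⟨2 / ‖Complex.exp (((2 * β * ((h : ℝ) - h') : ℝ) : ℂ) * Complex.I) - 1‖,
      by positivity, fun N => ?_⟩
    simp only [hh, if_false, zero_add]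
    simp_rw [chirp_corr α β h h']
    rw [← mul_sum, norm_mul, norm_mul, RCLike.norm_conj, chirpU_norm, chirpU_norm, one_mul,
      one_mul]
    exact geom_bound _ (Complex.norm_exp_ofReal_mul_I _) (chirp_ne_one β hβ h h' hh) N

lemma block_bound (α β : ℝ) (hβ : Irrational (β / Real.pi)) (H : ℕ) :
    ∃ C : ℝ, 0 ≤ C ∧ ∀ N : ℕ,
      ‖∑ n ∈ range N, ∑ h ∈ range H, chirpU α β (n + h)‖ ^ 2 ≤ N * (H * N + C) := by
  choose C hC0 hC using corr_bound α β hβ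
  refine ⟨∑ h ∈ range H, ∑ h' ∈ range H, C h h',
    sum_nonneg fun _ _ => sum_nonneg fun _ _ => hC0 _ _, fun N => ?_⟩
  have h1 : ‖∑ n ∈ range N, ∑ h ∈ range H, chirpU α β (n + h)‖ ^ 2 ≤
      N * ∑ n ∈ range N, ‖∑ h ∈ range H, chirpU α β (n + h)‖ ^ 2 := by
    have h2 := sq_sum_le_card_mul_sum_sq (s := range N)
      (f := fun n => ‖∑ h ∈ range H, chirpU α β (n + h)‖)
    rw [card_range] at h2
    refine le_trans ?_ h2
    gcongr
    exact norm_sum_le _ _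
  refine h1.trans ?_
  gcongr
  have h3 : ((∑ n ∈ range N, ‖∑ h ∈ range H, chirpU α β (n + h)‖ ^ 2 : ℝ) : ℂ) =
      ∑ h ∈ range H, ∑ h' ∈ range H,
        ∑ n ∈ range N, chirpU α β (n + h) * (starRingEnd ℂ) (chirpU α β (n + h')) := by
    push_cast
    simp_rw [← Complex.mul_conj', map_sum, sum_mul_sum]
    rw [sum_comm]
    refine sum_congr rfl fun h _ => ?_
    rw [sum_comm]
  have h4 : (∑ n ∈ range N, ‖∑ h ∈ range H, chirpU α β (n + h)‖ ^ 2 : ℝ) =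
      ‖((∑ n ∈ range N, ‖∑ h ∈ range H, chirpU α β (n + h)‖ ^ 2 : ℝ) : ℂ)‖ := by
    rw [Complex.norm_real, Real.norm_of_nonneg (sum_nonneg fun _ _ => by positivity)]
  rw [h4, h3]
  calc _ ≤ ∑ h ∈ range H, ∑ h' ∈ range H, ((if h = h' then (N : ℝ) else 0) + C h h') :=
        (norm_sum_le _ _).trans (sum_le_sum fun h _ => (norm_sum_le _ _).trans
          (sum_le_sum fun h' _ => hC h h' N))
    _ = _ := by
        simp_rw [sum_add_distrib]
        congr 1
        rw [sum_congr rfl (g := fun _ => (N : ℝ))]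
        · simp
        · intro h hh
          rw [sum_ite_eq, if_pos hh]

lemma shift_bound (α β : ℝ) (h N : ℕ) :
    ‖∑ n ∈ range N, chirpU α β n - ∑ n ∈ range N, chirpU α β (n + h)‖ ≤ 2 * h := by
  have e : ∑ n ∈ range N, chirpU α β n - ∑ n ∈ range N, chirpU α β (n + h) =
      ∑ n ∈ range h, chirpU α β n - ∑ n ∈ range h, chirpU α β (N + n) := by
    have h1 := sum_range_add (chirpU α β) N h
    have h2 := sum_range_add (chirpU α β) h N
    rw [add_comm h N] at h2
    simp_rw [add_comm h] at h2
    rw [h1] at h2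
    linear_combination h2
  rw [e]
  have b : ∀ f : ℕ → ℂ, (∀ n, ‖f n‖ = 1) → ‖∑ n ∈ range h, f n‖ ≤ h := by
    intro f hf
    refine (norm_sum_le _ _).trans ?_
    simp [hf]
  have := norm_sub_le (∑ n ∈ range h, chirpU α β n) (∑ n ∈ range h, chirpU α β (N + n))
  have := b _ (chirpU_norm α β)
  have := b (fun n => chirpU α β (N + n)) (fun n => chirpU_norm α β _)
  linarith

lemma base_bound (α β : ℝ) (hβ : Irrational (β / Real.pi)) (ε : ℝ) (hε : 0 < ε) :
    ∃ C : ℝ, 0 ≤ C ∧ ∀ N : ℕ, ‖∑ n ∈ range N, chirpU α β n‖ ≤ ε * N + C := by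
  obtain ⟨m0, hm0⟩ := exists_nat_one_div_lt hε
  set m : ℕ := m0 + 1 with hm
  have hm1 : (1 : ℝ) ≤ m := by rw [hm]; push_cast; linarith [(Nat.cast_nonneg m0 : (0 : ℝ) ≤ m0)]
  have hmε : 1 ≤ ε * m := by
    have : (1 : ℝ) / m < ε := by rw [hm]; push_cast; exact hm0
    rw [div_lt_iff₀ (by linarith)] at this
    exact this.le
  obtain ⟨C, hC0, hC⟩ := block_bound α β hβ (m ^ 2)
  refine ⟨C + 2 * (m : ℝ) ^ 4, by positivity, fun N => ?_⟩
  set S := ∑ n ∈ range N, chirpU α β n with hS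
  set T := ∑ n ∈ range N, ∑ h ∈ range (m ^ 2), chirpU α β (n + h) with hT
  have hN : (0 : ℝ) ≤ N := Nat.cast_nonneg N
  have hT2 : ‖T‖ ≤ m * N + C := by
    apply le_of_sq_le_sq _ (by positivity)
    refine (hC N).trans ?_
    push_cast
    have : 0 ≤ (m - 1 : ℝ) * (N * C) := mul_nonneg (by linarith) (by positivity)
    have : 0 ≤ (m : ℝ) * (N * C) := by positivity
    nlinarith [sq_nonneg C]
  have hd : ‖((m : ℂ) ^ 2) * S - T‖ ≤ 2 * (m : ℝ) ^ 4 := by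
    have e : ((m : ℂ) ^ 2) * S - T =
        ∑ h ∈ range (m ^ 2), (S - ∑ n ∈ range N, chirpU α β (n + h)) := by
      rw [hT, sum_comm, sum_sub_distrib]
      simp
    rw [e]
    refine (norm_sum_le _ _).trans ?_
    calc _ ≤ ∑ h ∈ range (m ^ 2), 2 * (m : ℝ) ^ 2 := by
          refine sum_le_sum fun h hh => (shift_bound α β h N).trans ?_
          have : (h : ℝ) ≤ (m : ℝ) ^ 2 := by exact_mod_cast (mem_range.1 hh).le
          linarith
      _ = _ := by simp; ring
  have hfin : (m : ℝ) ^ 2 * ‖S‖ ≤ m * N + C + 2 * (m : ℝ) ^ 4 := by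
    have e : ‖((m : ℂ) ^ 2) * S‖ = (m : ℝ) ^ 2 * ‖S‖ := by simp
    rw [← e]
    have := norm_sub_norm_le (((m : ℂ) ^ 2) * S) T
    linarith
  have hm2 : (1 : ℝ) ≤ (m : ℝ) ^ 2 := one_le_pow₀ hm1
  have h5 : (m : ℝ) * N ≤ (m : ℝ) ^ 2 * (ε * N) := by
    have := mul_le_mul_of_nonneg_right hmε (by positivity : 0 ≤ (m : ℝ) * N)
    nlinarith
  have h6 : C + 2 * (m : ℝ) ^ 4 ≤ (m : ℝ) ^ 2 * (C + 2 * (m : ℝ) ^ 4) :=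
    le_mul_of_one_le_left (by positivity) hm2
  refine le_of_mul_le_mul_left ?_ (by linarith : (0 : ℝ) < (m : ℝ) ^ 2)
  linarith

lemma abel_id (a : ℕ → ℂ) (N : ℕ) :
    ∑ n ∈ range N, ((n : ℂ) + 1) * a n =
      N * ∑ n ∈ range N, a n - ∑ m ∈ range N, ∑ n ∈ range m, a n := by
  induction N with
  | zero => simp
  | succ N ih =>
    simp only [sum_range_succ]
    rw [ih]; push_cast; ring

lemma weighted_bound (α β : ℝ) (hβ : Irrational (β / Real.pi)) (k : ℕ) : ∀ ε : ℝ, 0 < ε →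
    ∃ C : ℝ, 0 ≤ C ∧ ∀ N : ℕ,
      ‖∑ n ∈ range N, ((n : ℂ) + 1) ^ k * chirpU α β n‖ ≤ ε * (N : ℝ) ^ (k + 1) + C := by
  induction k with
  | zero => intro ε hε; simpa using base_bound α β hβ ε hε
  | succ k ih =>
    intro ε hε
    obtain ⟨C, hC0, hC⟩ := ih (ε / 4) (by positivity)
    refine ⟨2 * C ^ 2 / ε, by positivity, fun N => ?_⟩
    have e : ∑ n ∈ range N, ((n : ℂ) + 1) ^ (k + 1) * chirpU α β n =
        ∑ n ∈ range N, ((n : ℂ) + 1) * (((n : ℂ) + 1) ^ k * chirpU α β n) :=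
      sum_congr rfl fun n _ => by ring
    rw [e, abel_id]
    set B : ℝ := ε / 4 * (N : ℝ) ^ (k + 1) + C with hB
    have h1 : ‖(N : ℂ) * ∑ n ∈ range N, ((n : ℂ) + 1) ^ k * chirpU α β n‖ ≤ N * B := by
      rw [norm_mul, Complex.norm_natCast]
      gcongr
      exact hC N
    have h2 : ‖∑ m ∈ range N, ∑ n ∈ range m, ((n : ℂ) + 1) ^ k * chirpU α β n‖ ≤ N * B := by
      refine (norm_sum_le _ _).trans ?_
      calc _ ≤ ∑ m ∈ range N, B := by
            refine sum_le_sum fun m hm => (hC m).trans ?_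
            have : (m : ℝ) ≤ N := by exact_mod_cast (mem_range.1 hm).le
            rw [hB]; gcongr
        _ = _ := by simp
    refine (norm_sub_le _ _).trans ((add_le_add h1 h2).trans ?_)
    have h3 : (N : ℝ) ^ 2 ≤ (N : ℝ) ^ (k + 1 + 1) := by
      rcases Nat.eq_zero_or_pos N with h | h
      · simp [h]
      · exact pow_le_pow_right₀ (by exact_mod_cast h) (by omega)
    have h4 : 2 * C * N ≤ ε / 2 * (N : ℝ) ^ 2 + 2 * C ^ 2 / ε := by
      have : ε / 2 * (N : ℝ) ^ 2 + 2 * C ^ 2 / ε - 2 * C * N = (ε * N - 2 * C) ^ 2 / (2 * ε) := by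
        field_simp; ring
      have : 0 ≤ (ε * N - 2 * C) ^ 2 / (2 * ε) := by positivity
      linarith
    have h5 : ε / 2 * (N : ℝ) ^ 2 ≤ ε / 2 * (N : ℝ) ^ (k + 1 + 1) := by gcongr
    have h6 : (N : ℝ) * B + N * B = ε / 2 * (N : ℝ) ^ (k + 1 + 1) + 2 * C * N := by
      rw [hB]; ring
    linarith

lemma complex_lim (α β : ℝ) (hβ : Irrational (β / Real.pi)) (k : ℕ) :
    Tendsto (fun N : ℕ => ((1 / (N : ℝ) ^ (k + 1) : ℝ) : ℂ) *
      ∑ n ∈ range N, ((n : ℂ) + 1) ^ k * chirpU α β n) atTop (nhds 0) := by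
  rw [Metric.tendsto_atTop]
  intro ε hε
  obtain ⟨C, hC0, hC⟩ := weighted_bound α β hβ k (ε / 2) (by positivity)
  obtain ⟨M, hM⟩ := exists_nat_gt (2 * C / ε)
  refine ⟨M + 1, fun N hN => ?_⟩
  have hN1 : (1 : ℝ) ≤ N := by exact_mod_cast (by omega : 1 ≤ N)
  have hNM : (M : ℝ) ≤ N := by exact_mod_cast (by omega : M ≤ N)
  have hp : 0 < (N : ℝ) ^ (k + 1) := by positivity
  have hle : (N : ℝ) ≤ (N : ℝ) ^ (k + 1) := le_self_pow₀ hN1 (by omega)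
  rw [dist_zero_right, norm_mul, Complex.norm_real, Real.norm_of_nonneg (by positivity),
    one_div, inv_mul_lt_iff₀ hp]
  refine (hC N).trans_lt ?_
  rw [div_lt_iff₀ hε] at hM
  nlinarith

/-- Weighted chirp trigonometric sum limits: if `β / π` is irrational, then the normalized
weighted sums of `cos (α n + β n²)` and `sin (α n + β n²)` tend to `0`. -/
theorem statement_4 (β : ℝ) (hβ : Irrational (β / Real.pi)) (α : ℝ) (k : ℕ) :
    Tendsto (fun N : ℕ =>
        (1 / (N : ℝ) ^ (k + 1)) *
          ∑ n ∈ Finset.Icc 1 N, (n : ℝ) ^ k * Real.cos (α * n + β * n ^ 2))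
      atTop (nhds 0) ∧
    Tendsto (fun N : ℕ =>
        (1 / (N : ℝ) ^ (k + 1)) *
          ∑ n ∈ Finset.Icc 1 N, (n : ℝ) ^ k * Real.sin (α * n + β * n ^ 2))
      atTop (nhds 0) := by
  have key := complex_lim α β hβ k
  have hI : ∀ (f : ℕ → ℝ) (N : ℕ), ∑ n ∈ Finset.Icc 1 N, f n = ∑ n ∈ range N, f (n + 1) := by
    intro f N
    rw [range_eq_Ico, sum_Ico_add' f 0 N 1]
    rfl
  have hw : ∀ n : ℕ, ((n : ℂ) + 1) ^ k = (((n : ℝ) + 1) ^ k : ℝ) := by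
    intro n; push_cast; rfl
  constructor
  · have h := (Complex.continuous_re.tendsto 0).comp key
    rw [Complex.zero_re] at h
    refine h.congr fun N => ?_
    simp only [Function.comp, Complex.re_ofReal_mul, Complex.re_sum, hI, hw, chirpU,
      Complex.exp_ofReal_mul_I_re, Nat.cast_add, Nat.cast_one]
  · have h := (Complex.continuous_im.tendsto 0).comp key
    rw [Complex.zero_im] at h
    refine h.congr fun N => ?_
    simp only [Function.comp, Complex.im_ofReal_mul, Complex.im_sum, hI, hw, chirpU,
      Complex.exp_ofReal_mul_I_im, Nat.cast_add, Nat.cast_one]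
end

section
/- Let β ∈ ℝ be such that β/π is irrational, let α ∈ ℝ, and let k be a nonnegative integer. Then lim_{N→∞} (1/N^{k+1}) Σ_{n=1}^{N} n^k cos²(α n + β n²) = 1/(2(k+1)) and lim_{N→∞} (1/N^{k+1}) Σ_{n=1}^{N} n^k sin²(α n + β n²) = 1/(2(k+1)). -/
open Filter Finset

theorem aux_shift (u : ℕ → ℂ) (hu : ∀ n, ‖u n‖ = 1) (h N : ℕ) :
    ‖∑ n ∈ range N, u (n + h) - ∑ n ∈ range N, u n‖ ≤ 2 * h := by
  induction h with
  | zero => simp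
  | succ h ih =>
    have e : ∑ n ∈ range N, u (n + (h + 1)) - ∑ n ∈ range N, u (n + h) = u (N + h) - u h := by
      rw [← Finset.sum_sub_distrib]
      have := Finset.sum_range_sub (fun n => u (n + h)) N
      simp only [zero_add] at this
      rw [← this]
      refine Finset.sum_congr rfl fun n _ => ?_
      rw [show n + (h + 1) = n + 1 + h by ring]
    have e2 : ‖u (N + h) - u h‖ ≤ 2 := by
      refine (norm_sub_le _ _).trans ?_
      rw [hu, hu]; norm_num
    calc ‖∑ n ∈ range N, u (n + (h + 1)) - ∑ n ∈ range N, u n‖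
        = ‖(u (N + h) - u h) + (∑ n ∈ range N, u (n + h) - ∑ n ∈ range N, u n)‖ := by
          rw [← e]; congr 1; ring
      _ ≤ 2 + 2 * h := (norm_add_le _ _).trans (add_le_add e2 ih)
      _ = 2 * ((h + 1 : ℕ) : ℝ) := by push_cast; ring

theorem aux_vdc (u : ℕ → ℂ) (hu : ∀ n, ‖u n‖ = 1)
    (hc : ∀ h h' : ℕ, h ≠ h' → Tendsto (fun N : ℕ => ((N : ℂ))⁻¹ *
      ∑ n ∈ range N, u (n + h) * (starRingEnd ℂ) (u (n + h'))) atTop (nhds 0)) :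
    Tendsto (fun N : ℕ => ((N : ℂ))⁻¹ * ∑ n ∈ range N, u n) atTop (nhds 0) := by
  have key : ∀ H : ℕ, 0 < H → Tendsto (fun N : ℕ => ((N : ℝ))⁻¹ *
      ∑ n ∈ range N, ‖∑ h ∈ range H, u (n + h)‖ ^ 2) atTop (nhds (H : ℝ)) := by
    intro H hH
    have h1 : Tendsto (fun N : ℕ => ∑ h ∈ range H, ∑ h' ∈ range H, ((N : ℂ))⁻¹ *
      ∑ n ∈ range N, u (n + h) * (starRingEnd ℂ) (u (n + h'))) atTop
      (nhds (∑ h ∈ range H, ∑ h' ∈ range H, if h = h' then (1 : ℂ) else 0)) := by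
      refine tendsto_finsetSum _ fun h _ => tendsto_finsetSum _ fun h' _ => ?_
      split_ifs with hh
      · subst hh
        refine tendsto_const_nhds.congr' ?_
        filter_upwards [eventually_gt_atTop 0] with N hN
        have : (N : ℂ) ≠ 0 := by exact_mod_cast hN.ne'
        simp [Complex.mul_conj, Complex.normSq_eq_norm_sq, hu, this]
      · exact hc h h' hh
    have h2 : (∑ h ∈ range H, ∑ h' ∈ range H, if h = h' then (1 : ℂ) else 0) = (H : ℂ) := by
      rw [Finset.sum_congr rfl (g := fun _ => (1 : ℂ))]
      · simp
      · intro h hh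
        rw [Finset.sum_ite_eq, if_pos hh]
    rw [h2] at h1
    have h3 := (Complex.continuous_re.tendsto _).comp h1
    simp only [Complex.natCast_re] at h3
    refine h3.congr fun N => ?_
    have h4 : (∑ h ∈ range H, ∑ h' ∈ range H, ((N : ℂ))⁻¹ *
      ∑ n ∈ range N, u (n + h) * (starRingEnd ℂ) (u (n + h'))) =
      (((N : ℝ)⁻¹ * ∑ n ∈ range N, ‖∑ h ∈ range H, u (n + h)‖ ^ 2 : ℝ) : ℂ) := by
      push_cast
      simp_rw [← Complex.mul_conj', map_sum, Finset.sum_mul_sum, ← Finset.mul_sum]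
      congr 1
      symm
      rw [Finset.sum_comm]
      refine Finset.sum_congr rfl fun h _ => ?_
      simp_rw [Finset.mul_sum]
      rw [Finset.sum_comm]
    simp only [Function.comp_apply]
    rw [h4, Complex.ofReal_re]
  have bound : ∀ H : ℕ, 0 < H → ∀ N : ℕ, 0 < N → ‖((N : ℂ))⁻¹ * ∑ n ∈ range N, u n‖ ≤
      (H : ℝ)⁻¹ * Real.sqrt (((N : ℝ))⁻¹ *
      ∑ n ∈ range N, ‖∑ h ∈ range H, u (n + h)‖ ^ 2) + (2 * H) * (N : ℝ)⁻¹ := by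
    intro H hH N hN
    have hH' : (0 : ℝ) < H := by exact_mod_cast hH
    have hN' : (0 : ℝ) < N := by exact_mod_cast hN
    set S := ∑ n ∈ range N, u n with hS
    have a1 : ‖(∑ n ∈ range N, ∑ h ∈ range H, u (n + h)) - H * S‖ ≤ H * (2 * H) := by
      rw [Finset.sum_comm]
      have : (H : ℂ) * S = ∑ h ∈ range H, S := by simp
      rw [this, ← Finset.sum_sub_distrib]
      refine (norm_sum_le _ _).trans ?_
      have : (H : ℝ) * (2 * H) = ∑ h ∈ range H, (2 * H : ℝ) := by simp
      rw [this]
      refine Finset.sum_le_sum fun h hh => (aux_shift u hu h N).trans ?_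
      have : (h : ℝ) ≤ H := by exact_mod_cast (Finset.mem_range.1 hh).le
      linarith
    set A := ∑ n ∈ range N, ‖∑ h ∈ range H, u (n + h)‖ ^ 2 with hA
    have a2 : ‖∑ n ∈ range N, ∑ h ∈ range H, u (n + h)‖ ≤ N * Real.sqrt ((N : ℝ)⁻¹ * A) := by
      refine (norm_sum_le _ _).trans ?_
      have cs := sq_sum_le_card_mul_sum_sq (s := range N)
        (f := fun n => ‖∑ h ∈ range H, u (n + h)‖)
      rw [Finset.card_range] at cs
      refine abs_le_of_sq_le_sq' ?_ (by positivity) |>.2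
      have hA0 : 0 ≤ A := Finset.sum_nonneg fun _ _ => by positivity
      rw [mul_pow, Real.sq_sqrt (by positivity)]
      refine cs.trans (le_of_eq ?_)
      field_simp
      rw [hA]
    have a3 : ‖(H : ℂ) * S‖ ≤ N * Real.sqrt ((N : ℝ)⁻¹ * A) + H * (2 * H) := by
      have := norm_sub_norm_le ((H : ℂ) * S) (∑ n ∈ range N, ∑ h ∈ range H, u (n + h))
      rw [norm_sub_rev] at this
      linarith
    rw [norm_mul, Complex.norm_natCast] at a3
    rw [norm_mul, norm_inv, Complex.norm_natCast]
    have : (N : ℝ)⁻¹ * ‖S‖ = (H : ℝ)⁻¹ * (N : ℝ)⁻¹ * (H * ‖S‖) := by field_simp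
    rw [this]
    refine (mul_le_mul_of_nonneg_left a3 (by positivity)).trans (le_of_eq ?_)
    field_simp
  rw [tendsto_zero_iff_norm_tendsto_zero]
  rw [Metric.tendsto_atTop']
  intro ε hε
  have lim0 : Tendsto (fun H : ℕ => (H : ℝ)⁻¹ * Real.sqrt H) atTop (nhds 0) := by
    have := (tendsto_inv_atTop_zero.comp
      (Real.tendsto_sqrt_atTop.comp (tendsto_natCast_atTop_atTop (R := ℝ))))
    refine this.congr fun H => ?_
    simp only [Function.comp_apply]
    rcases Nat.eq_zero_or_pos H with rfl | hH
    · simp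
    · have hH' : (0 : ℝ) < H := by exact_mod_cast hH
      have := Real.sq_sqrt hH'.le
      have h0 := Real.sqrt_pos.2 hH'
      field_simp
      linarith
  obtain ⟨H, hHε, hH⟩ := ((lim0.eventually (gt_mem_nhds hε)).and (eventually_gt_atTop 0)).exists
  have lim1 : Tendsto (fun N : ℕ => (H : ℝ)⁻¹ * Real.sqrt (((N : ℝ))⁻¹ *
      ∑ n ∈ range N, ‖∑ h ∈ range H, u (n + h)‖ ^ 2) + (2 * H) * (N : ℝ)⁻¹) atTop
      (nhds ((H : ℝ)⁻¹ * Real.sqrt H + (2 * H) * 0)) :=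
    (((key H hH).sqrt).const_mul _).add
      ((tendsto_inv_atTop_zero.comp (tendsto_natCast_atTop_atTop (R := ℝ))).const_mul _)
  rw [mul_zero, add_zero] at lim1
  have ev := (lim1.eventually (gt_mem_nhds hHε)).and (eventually_gt_atTop 0)
  obtain ⟨N0, hN0⟩ := eventually_atTop.1 ev
  refine ⟨N0, fun N hN => ?_⟩
  obtain ⟨b1, b2⟩ := hN0 N hN.le
  rw [dist_zero_right, norm_norm]
  exact (bound H hH N b2).trans_lt b1

theorem aux_geom (z c : ℂ) (hz : ‖z‖ = 1) (hz1 : z ≠ 1) :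
    Tendsto (fun N : ℕ => ((N : ℂ))⁻¹ * ∑ n ∈ range N, c * z ^ n) atTop (nhds 0) := by
  have hb : ∀ N : ℕ, ‖((N : ℂ))⁻¹ * ∑ n ∈ range N, c * z ^ n‖ ≤
      (‖c‖ * (2 / ‖z - 1‖)) * (N : ℝ)⁻¹ := by
    intro N
    rw [← Finset.mul_sum, geom_sum_eq hz1, norm_mul, norm_mul, norm_div, norm_inv,
      Complex.norm_natCast, mul_comm]
    gcongr
    refine (norm_sub_le _ _).trans ?_
    rw [norm_pow, hz]; norm_num
  refine squeeze_zero_norm hb ?_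
  simpa using ((tendsto_inv_atTop_zero.comp (tendsto_natCast_atTop_atTop (R := ℝ))).const_mul
    (‖c‖ * (2 / ‖z - 1‖)))

theorem aux_chirp (β : ℝ) (hβ : Irrational (β / Real.pi)) (α : ℝ) :
    Tendsto (fun N : ℕ => ((N : ℝ))⁻¹ * ∑ n ∈ range N,
      Real.cos (2 * (α * (n + 1 : ℕ) + β * (n + 1 : ℕ) ^ 2))) atTop (nhds 0) := by
  let θ : ℕ → ℝ := fun n => 2 * (α * (n + 1 : ℕ) + β * (n + 1 : ℕ) ^ 2)
  have hu : ∀ n, ‖Complex.exp (θ n * Complex.I)‖ = 1 := fun n =>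
    Complex.norm_exp_ofReal_mul_I _
  have main := aux_vdc (fun n => Complex.exp (θ n * Complex.I)) hu ?_
  · have := (Complex.continuous_re.tendsto _).comp main
    simp only [Complex.zero_re] at this
    refine this.congr fun N => ?_
    simp only [Function.comp_apply]
    rw [← Complex.ofReal_natCast, ← Complex.ofReal_inv, Complex.re_ofReal_mul, Complex.re_sum]
    simp only [Complex.exp_ofReal_mul_I_re, θ]
  · intro h h' hh
    let z : ℂ := Complex.exp ((4 * β * ((h : ℝ) - h') : ℝ) * Complex.I)
    have hz1 : z ≠ 1 := by
      intro hz
      obtain ⟨m, hm⟩ := Complex.exp_eq_one_iff.1 hz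
      have hm2 : 4 * β * ((h : ℝ) - h') = m * (2 * Real.pi) := by
        have : ((4 * β * ((h : ℝ) - h') : ℝ) : ℂ) = ((m * (2 * Real.pi) : ℝ) : ℂ) := by
          apply mul_right_cancel₀ Complex.I_ne_zero
          rw [hm]; push_cast; ring
        exact_mod_cast this
      have hd : ((h : ℝ) - h') ≠ 0 := sub_ne_zero.2 (by exact_mod_cast hh)
      apply hβ
      refine ⟨(m : ℚ) / (2 * ((h : ℚ) - h')), ?_⟩
      push_cast
      have := Real.pi_ne_zero
      field_simp
      linarith
    refine (aux_geom z (Complex.exp ((θ h - θ h' : ℝ) * Complex.I))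
      (Complex.norm_exp_ofReal_mul_I _) hz1).congr fun N => ?_
    congr 1
    refine Finset.sum_congr rfl fun n _ => ?_
    rw [← Complex.exp_conj, ← Complex.exp_nat_mul, ← Complex.exp_add, ← Complex.exp_add]
    congr 1
    simp only [θ, map_mul, Complex.conj_ofReal, Complex.conj_I]
    push_cast
    ring

theorem aux_abel (a : ℕ → ℝ) (k : ℕ)
    (h : Tendsto (fun N : ℕ => ((N : ℝ) ^ (k + 1))⁻¹ * ∑ n ∈ range N, a n) atTop (nhds 0)) :
    Tendsto (fun N : ℕ => ((N : ℝ) ^ (k + 2))⁻¹ * ∑ n ∈ range N, ((n + 1 : ℕ) : ℝ) * a n)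
      atTop (nhds 0) := by
  have e : ∀ N : ℕ, ∑ n ∈ range N, ((n + 1 : ℕ) : ℝ) * a n =
      N * ∑ n ∈ range N, a n - ∑ n ∈ range N, ∑ m ∈ range n, a m := by
    intro N
    induction N with
    | zero => simp
    | succ N ih =>
      rw [Finset.sum_range_succ, ih, Finset.sum_range_succ (fun n => ∑ m ∈ range n, a m),
        Finset.sum_range_succ a]
      push_cast; ring
  have hc := (tendsto_zero_iff_abs_tendsto_zero _).1 h
  have hces := hc.cesaro
  have hb : ∀ N : ℕ, ‖((N : ℝ) ^ (k + 2))⁻¹ * ∑ n ∈ range N, ((n + 1 : ℕ) : ℝ) * a n‖ ≤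
      |((N : ℝ) ^ (k + 1))⁻¹ * ∑ n ∈ range N, a n| + (N : ℝ)⁻¹ * ∑ n ∈ range N,
        |((n : ℝ) ^ (k + 1))⁻¹ * ∑ m ∈ range n, a m| := by
    intro N
    rcases Nat.eq_zero_or_pos N with rfl | hN
    · simp
    have hN' : (0 : ℝ) < N := by exact_mod_cast hN
    rw [e, mul_sub]
    refine (norm_sub_le _ _).trans (add_le_add (le_of_eq ?_) ?_)
    · rw [Real.norm_eq_abs]; congr 1; field_simp; ring
    · have : ((N : ℝ) ^ (k + 2))⁻¹ * ∑ n ∈ range N, ∑ m ∈ range n, a m =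
        (N : ℝ)⁻¹ * ∑ n ∈ range N, ((N : ℝ) ^ (k + 1))⁻¹ * ∑ m ∈ range n, a m := by
        rw [← Finset.mul_sum]; field_simp; ring
      rw [this, norm_mul, Real.norm_of_nonneg (by positivity : (0 : ℝ) ≤ (N : ℝ)⁻¹)]
      gcongr
      refine (norm_sum_le _ _).trans (Finset.sum_le_sum fun n hn => ?_)
      rcases Nat.eq_zero_or_pos n with rfl | hn0
      · simp
      have hn' : (0 : ℝ) < n := by exact_mod_cast hn0
      have hnN : (n : ℝ) ≤ N := by exact_mod_cast (Finset.mem_range.1 hn).le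
      rw [Real.norm_eq_abs, abs_mul, abs_mul,
        abs_of_pos (by positivity : (0 : ℝ) < ((N : ℝ) ^ (k + 1))⁻¹),
        abs_of_pos (by positivity : (0 : ℝ) < ((n : ℝ) ^ (k + 1))⁻¹)]
      gcongr
  refine squeeze_zero_norm hb ?_
  simpa using hc.add hces

theorem aux_weighted (a : ℕ → ℝ)
    (h : Tendsto (fun N : ℕ => ((N : ℝ))⁻¹ * ∑ n ∈ range N, a n) atTop (nhds 0)) (k : ℕ) :
    Tendsto (fun N : ℕ => ((N : ℝ) ^ (k + 1))⁻¹ * ∑ n ∈ range N, ((n + 1 : ℕ) : ℝ) ^ k * a n)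
      atTop (nhds 0) := by
  induction k with
  | zero => simpa using h
  | succ k ih =>
    refine (aux_abel _ k ih).congr fun N => ?_
    congr 1
    refine Finset.sum_congr rfl fun n _ => ?_
    ring

theorem aux_pow (k : ℕ) :
    Tendsto (fun N : ℕ => ((N : ℝ) ^ (k + 1))⁻¹ * ∑ n ∈ Finset.Icc 1 N, (n : ℝ) ^ k)
      atTop (nhds (1 / ((k : ℝ) + 1))) := by
  have h1 : Tendsto (fun N : ℕ => ∑ i ∈ range (k + 1),
      ((bernoulli' i * (k + 1).choose i / (k + 1) : ℚ) : ℝ) * ((N : ℝ)⁻¹) ^ i) atTop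
      (nhds (∑ i ∈ range (k + 1),
      ((bernoulli' i * (k + 1).choose i / (k + 1) : ℚ) : ℝ) * (0 : ℝ) ^ i)) :=
    tendsto_finsetSum _ fun i _ => ((tendsto_inv_atTop_zero.comp
      (tendsto_natCast_atTop_atTop (R := ℝ))).pow i).const_mul _
  have h2 : (∑ i ∈ range (k + 1),
      ((bernoulli' i * (k + 1).choose i / (k + 1) : ℚ) : ℝ) * (0 : ℝ) ^ i) = 1 / ((k : ℝ) + 1) := by
    rw [Finset.sum_range_succ']
    simp
  rw [h2] at h1
  refine h1.congr' ?_
  filter_upwards [eventually_gt_atTop 0] with N hN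
  have hN' : (N : ℝ) ≠ 0 := by exact_mod_cast hN.ne'
  have h3 : ∑ n ∈ Finset.Icc 1 N, (n : ℝ) ^ k = ((∑ n ∈ Finset.Ico 1 (N + 1), (n : ℚ) ^ k : ℚ) : ℝ) := by
    push_cast
    rfl
  rw [h3, sum_Ico_pow]
  push_cast
  rw [Finset.mul_sum]
  refine Finset.sum_congr rfl fun i hi => ?_
  have hi' : i ≤ k + 1 := (Finset.mem_range.1 hi).le
  have : (N : ℝ) ^ (k + 1) = (N : ℝ) ^ (k + 1 - i) * (N : ℝ) ^ i := by
    rw [← pow_add, Nat.sub_add_cancel hi']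
  rw [this, inv_pow]
  field_simp

theorem aux_cos (β : ℝ) (hβ : Irrational (β / Real.pi)) (α : ℝ) (k : ℕ) :
    Tendsto (fun N : ℕ => ((N : ℝ) ^ (k + 1))⁻¹ * ∑ n ∈ Finset.Icc 1 N,
      (n : ℝ) ^ k * Real.cos (2 * (α * n + β * n ^ 2))) atTop (nhds 0) := by
  refine (aux_weighted _ (aux_chirp β hβ α) k).congr fun N => ?_
  congr 1
  rw [Finset.range_eq_Ico, Finset.sum_Ico_add' (fun n : ℕ => (n : ℝ) ^ k *
    Real.cos (2 * (α * n + β * n ^ 2))) 0 N 1]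
  rfl

/-- Weighted chirp squared trigonometric sum limits: if `β / π` is irrational, then the
normalized weighted sums of `cos² (α n + β n²)` and `sin² (α n + β n²)` tend to `1/(2(k+1))`. -/
theorem statement_5 (β : ℝ) (hβ : Irrational (β / Real.pi)) (α : ℝ) (k : ℕ) :
    Tendsto (fun N : ℕ =>
        (1 / (N : ℝ) ^ (k + 1)) *
          ∑ n ∈ Finset.Icc 1 N, (n : ℝ) ^ k * Real.cos (α * n + β * n ^ 2) ^ 2)
      atTop (nhds (1 / (2 * ((k : ℝ) + 1)))) ∧
    Tendsto (fun N : ℕ =>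
        (1 / (N : ℝ) ^ (k + 1)) *
          ∑ n ∈ Finset.Icc 1 N, (n : ℝ) ^ k * Real.sin (α * n + β * n ^ 2) ^ 2)
      atTop (nhds (1 / (2 * ((k : ℝ) + 1)))) := by
  have hp := aux_pow k
  have hc := aux_cos β hβ α k
  have hl : 1 / (2 * ((k : ℝ) + 1)) = 1 / 2 * (1 / ((k : ℝ) + 1)) := by
    have : (k : ℝ) + 1 ≠ 0 := by positivity
    field_simp
  constructor
  · have := (hp.add hc).const_mul (1 / 2)
    rw [add_zero, ← hl] at this
    refine this.congr fun N => ?_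
    rw [← mul_add, ← Finset.sum_add_distrib, mul_left_comm, one_div ((N : ℝ) ^ (k + 1)),
      Finset.mul_sum]
    congr 1
    refine Finset.sum_congr rfl fun n _ => ?_
    rw [Real.cos_two_mul]; ring
  · have := (hp.sub hc).const_mul (1 / 2)
    rw [sub_zero, ← hl] at this
    refine this.congr fun N => ?_
    rw [← mul_sub, ← Finset.sum_sub_distrib, mul_left_comm, one_div ((N : ℝ) ^ (k + 1)),
      Finset.mul_sum]
    congr 1
    refine Finset.sum_congr rfl fun n _ => ?_
    rw [Real.cos_two_mul, Real.cos_sq']; ring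
end

section
/- Let β ∈ ℝ be such that β/π is irrational, let α ∈ ℝ, and let k be a nonnegative integer. Then lim_{N→∞} (1/N^{k+1}) Σ_{n=1}^{N} n^k cos(α n + β n²) sin(α n + β n²) = 0. -/
open Filter Finset

open Asymptotics in
/-- Averages of a bounded sequence vanish when all shifted correlations have vanishing averages. -/
lemma vdc_aux (u : ℕ → ℂ) (hu : ∀ n, ‖u n‖ = 1)
    (hc : ∀ h h' : ℕ, h ≠ h' → Tendsto (fun N : ℕ => (1 / (N : ℂ)) *
      ∑ n ∈ range N, u (n + h) * (starRingEnd ℂ) (u (n + h'))) atTop (nhds 0)) :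
    (fun N : ℕ => ∑ n ∈ range N, u n) =o[atTop] (fun N : ℕ => (N : ℝ)) := by
  rw [isLittleO_iff]
  intro ε hε
  obtain ⟨H, hH⟩ := exists_nat_gt (8 / ε ^ 2 + 1)
  have hH1 : (1 : ℝ) < H := by
    have : 0 < 8 / ε ^ 2 := by positivity
    linarith
  have hH8 : 8 ≤ ε ^ 2 * H := by
    have : 8 / ε ^ 2 < H := by linarith
    rw [div_lt_iff₀ (by positivity)] at this
    linarith
  -- mean square of the window sums
  have hV : Tendsto (fun N : ℕ => (1 / (N : ℂ)) * ∑ n ∈ range N,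
      (∑ h ∈ range H, u (n + h)) * (starRingEnd ℂ) (∑ h ∈ range H, u (n + h)))
      atTop (nhds (H : ℂ)) := by
    have h1 : ∀ h h' : ℕ, Tendsto (fun N : ℕ => (1 / (N : ℂ)) *
        ∑ n ∈ range N, u (n + h) * (starRingEnd ℂ) (u (n + h'))) atTop
        (nhds (if h = h' then 1 else 0)) := by
      intro h h'
      split_ifs with e
      · subst e
        apply tendsto_const_nhds.congr'
        filter_upwards [eventually_gt_atTop 0] with N hN
        have : (N : ℂ) ≠ 0 := by exact_mod_cast hN.ne'
        simp [Complex.mul_conj, Complex.normSq_eq_norm_sq, hu, this]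
      · exact hc h h' e
    have h2 := tendsto_finsetSum (range H) (fun h _ =>
      tendsto_finsetSum (range H) (fun h' _ => h1 h h'))
    have e : ∑ h ∈ range H, ∑ h' ∈ range H, (if h = h' then (1 : ℂ) else 0) = H := by
      simp +contextual [Finset.sum_ite_eq]
    rw [e] at h2
    refine h2.congr (fun N => ?_)
    simp only [← Finset.mul_sum]
    congr 1
    simp only [map_sum, Finset.sum_mul_sum]
    rw [Finset.sum_comm' (s := range N) (t' := range H) (s' := fun _ => range N)
      (t := fun _ => range H) (by simp [and_comm])]
    refine Finset.sum_congr rfl fun h _ => ?_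
    rw [Finset.sum_comm]
  have hV2 : ∀ᶠ N : ℕ in atTop,
      ∑ n ∈ range N, ‖∑ h ∈ range H, u (n + h)‖ ^ 2 ≤ 2 * H * N := by
    have h3 := (Complex.continuous_re.tendsto _).comp hV
    have h4 : ((H : ℂ)).re < 2 * H := by simp; linarith
    filter_upwards [h3.eventually_lt_const h4, eventually_gt_atTop 0] with N hN hN0
    have hNp : (0 : ℝ) < N := by exact_mod_cast hN0
    have e : (1 / (N : ℂ)) * ∑ n ∈ range N,
      (∑ h ∈ range H, u (n + h)) * (starRingEnd ℂ) (∑ h ∈ range H, u (n + h))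
      = (((1 / (N : ℝ)) * ∑ n ∈ range N, ‖∑ h ∈ range H, u (n + h)‖ ^ 2 : ℝ) : ℂ) := by
      push_cast
      congr 1
      refine Finset.sum_congr rfl fun n _ => ?_
      rw [Complex.mul_conj, Complex.normSq_eq_norm_sq]
      push_cast
      rfl
    simp only [Function.comp_apply] at hN
    rw [e, Complex.ofReal_re, one_div, inv_mul_lt_iff₀ hNp] at hN
    linarith
  filter_upwards [hV2, eventually_ge_atTop ⌈4 * H / ε⌉₊] with N hN hNl
  have hNl' : 4 * H / ε ≤ N := Nat.ceil_le.mp hNl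
  rw [div_le_iff₀ hε] at hNl'
  have hcs : ‖∑ n ∈ range N, ∑ h ∈ range H, u (n + h)‖ ≤ N * (ε * H / 2) := by
    apply le_of_sq_le_sq _ (by positivity)
    calc ‖∑ n ∈ range N, ∑ h ∈ range H, u (n + h)‖ ^ 2
        ≤ (∑ n ∈ range N, ‖∑ h ∈ range H, u (n + h)‖) ^ 2 := by
          gcongr; exact norm_sum_le _ _
      _ ≤ N * ∑ n ∈ range N, ‖∑ h ∈ range H, u (n + h)‖ ^ 2 := by
          simpa using sq_sum_le_card_mul_sum_sq (s := range N)
            (f := fun n => ‖∑ h ∈ range H, u (n + h)‖)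
      _ ≤ N * (2 * H * N) := by gcongr
      _ ≤ (N * (ε * H / 2)) ^ 2 := by
          have : 0 ≤ (N : ℝ) ^ 2 * H := by positivity
          nlinarith
  have hsh : ∀ h : ℕ, ‖∑ n ∈ range N, u n - ∑ n ∈ range N, u (n + h)‖ ≤ 2 * h := by
    intro h
    have e : ∑ n ∈ range N, u n - ∑ n ∈ range N, u (n + h)
        = ∑ n ∈ range h, u n - ∑ n ∈ range h, u (N + n) := by
      have e1 := Finset.sum_range_add u N h
      have e2 := Finset.sum_range_add u h N
      rw [add_comm h N] at e2
      simp only [add_comm h] at e2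
      linear_combination e2 - e1
    rw [e]
    have b : ∀ f : ℕ → ℂ, (∀ n, ‖f n‖ = 1) → ‖∑ n ∈ range h, f n‖ ≤ h := by
      intro f hf
      simpa [hf] using norm_sum_le (range h) f
    calc _ ≤ _ := norm_sub_le _ _
      _ ≤ h + h := add_le_add (b _ hu) (b _ fun n => hu _)
      _ = 2 * h := by ring
  have hfin : ‖(H : ℂ) * ∑ n ∈ range N, u n‖ ≤ N * (ε * H / 2) + 2 * H * H := by
    have e : (H : ℂ) * ∑ n ∈ range N, u n = ∑ n ∈ range N, ∑ h ∈ range H, u (n + h)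
        + ∑ h ∈ range H, (∑ n ∈ range N, u n - ∑ n ∈ range N, u (n + h)) := by
      rw [Finset.sum_comm, ← Finset.sum_add_distrib]
      simp
    rw [e]
    refine (norm_add_le _ _).trans (add_le_add hcs ?_)
    calc _ ≤ _ := norm_sum_le _ _
      _ ≤ ∑ h ∈ range H, 2 * (H : ℝ) := by
          refine Finset.sum_le_sum fun h hh => (hsh h).trans ?_
          have := Finset.mem_range.mp hh
          have : (h : ℝ) ≤ H := by exact_mod_cast this.le
          linarith
      _ = 2 * H * H := by simp; ring
  rw [norm_mul, Complex.norm_natCast] at hfin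
  rw [Real.norm_natCast]
  have hHp : (0 : ℝ) < H := by linarith
  refine le_of_mul_le_mul_left (hfin.trans ?_) hHp
  nlinarith

open Asymptotics in
/-- Summation by parts: polynomial weights. -/
lemma weight_aux (u : ℕ → ℂ)
    (h0 : (fun N : ℕ => ∑ n ∈ range N, u n) =o[atTop] (fun N : ℕ => (N : ℝ))) (k : ℕ) :
    (fun N : ℕ => ∑ n ∈ range N, (n : ℂ) ^ k * u n) =o[atTop]
      (fun N : ℕ => (N : ℝ) ^ (k + 1)) := by
  induction k with
  | zero => simpa using h0
  | succ k ih =>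
    have e : ∀ N : ℕ, ∑ n ∈ range N, (n : ℂ) ^ (k + 1) * u n =
        (N : ℂ) * ∑ n ∈ range N, (n : ℂ) ^ k * u n
          - ∑ m ∈ range N, ∑ n ∈ range (m + 1), (n : ℂ) ^ k * u n := by
      intro N
      induction N with
      | zero => simp
      | succ N ihN =>
        rw [Finset.sum_range_succ, ihN, Finset.sum_range_succ _ N, Finset.sum_range_succ _ N,
          Finset.sum_range_succ _ N]
        push_cast
        ring
    simp only [e]
    refine IsLittleO.sub ?_ ?_
    · have : (fun N : ℕ => (N : ℂ)) =O[atTop] (fun N : ℕ => (N : ℝ)) :=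
        isBigO_of_le _ (fun N => by simp)
      refine (this.mul_isLittleO ih).congr_right fun N => ?_
      ring
    · have h1 := (ih.comp_tendsto (tendsto_add_atTop_nat 1))
      have h2 := h1.sum_range (fun n => by simp only [Function.comp_apply]; positivity) (by
        refine tendsto_atTop_mono (f := fun n : ℕ => (n : ℝ)) (fun n => ?_)
          tendsto_natCast_atTop_atTop
        calc (n : ℝ) = ∑ i ∈ range n, (1 : ℝ) := by simp
          _ ≤ _ := Finset.sum_le_sum fun i _ => by
            simp only [Function.comp_apply]
            exact one_le_pow₀ (by simp))
      refine h2.trans_le fun N => ?_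
      rw [Real.norm_of_nonneg (Finset.sum_nonneg fun i _ => by
        simp only [Function.comp_apply]; positivity), Real.norm_of_nonneg (by positivity)]
      calc _ ≤ ∑ i ∈ range N, (N : ℝ) ^ (k + 1) := Finset.sum_le_sum fun i hi => by
            simp only [Function.comp_apply]
            have := Finset.mem_range.mp hi
            gcongr
            omega
        _ = (N : ℝ) ^ (k + 1 + 1) := by simp; ring

open Asymptotics in
lemma chirp_aux (β : ℝ) (hβ : Irrational (β / Real.pi)) (α : ℝ) :
    (fun N : ℕ => ∑ n ∈ range N,
      Complex.exp (((2 * (α * n + β * n ^ 2) : ℝ) : ℂ) * Complex.I))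
      =o[atTop] (fun N : ℕ => (N : ℝ)) := by
  refine vdc_aux _ (fun n => Complex.norm_exp_ofReal_mul_I _) ?_
  intro h h' hne
  set z : ℂ := Complex.exp (((4 * β * ((h : ℝ) - h') : ℝ) : ℂ) * Complex.I) with hz
  set c : ℂ := Complex.exp (((2 * α * ((h : ℝ) - h') + 2 * β * ((h : ℝ) ^ 2 - h' ^ 2) : ℝ) : ℂ)
    * Complex.I) with hcdef
  have hzn : ‖z‖ = 1 := Complex.norm_exp_ofReal_mul_I _
  have hcn : ‖c‖ = 1 := Complex.norm_exp_ofReal_mul_I _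
  have hd : (h : ℝ) - h' ≠ 0 := sub_ne_zero.mpr (by exact_mod_cast hne)
  have hz1 : z ≠ 1 := by
    intro hh
    rw [hz, Complex.exp_eq_one_iff] at hh
    obtain ⟨m, hm⟩ := hh
    have hm2 : ((4 * β * ((h : ℝ) - h') : ℝ) : ℂ) = ((m * (2 * Real.pi) : ℝ) : ℂ) := by
      apply mul_right_cancel₀ Complex.I_ne_zero
      rw [hm]; push_cast; ring
    have hm3 := Complex.ofReal_injective hm2
    apply hβ
    refine ⟨(m : ℚ) / (2 * ((h : ℚ) - h')), ?_⟩
    push_cast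
    have := Real.pi_ne_zero
    field_simp
    linarith
  have hterm : ∀ n : ℕ,
      Complex.exp (((2 * (α * (n + h : ℕ) + β * (n + h : ℕ) ^ 2) : ℝ) : ℂ) * Complex.I) *
      (starRingEnd ℂ)
        (Complex.exp (((2 * (α * (n + h' : ℕ) + β * (n + h' : ℕ) ^ 2) : ℝ) : ℂ) * Complex.I))
      = c * z ^ n := by
    intro n
    rw [← Complex.exp_conj, ← Complex.exp_add, hz, hcdef, ← Complex.exp_nat_mul,
      ← Complex.exp_add, map_mul, Complex.conj_I, Complex.conj_ofReal]
    congr 1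
    push_cast
    ring
  simp only [hterm, ← Finset.mul_sum, geom_sum_eq hz1]
  have hlim : Tendsto (fun N : ℕ => (2 / ‖z - 1‖) / (N : ℝ)) atTop (nhds 0) :=
    tendsto_const_div_atTop_nhds_zero_nat _
  refine squeeze_zero_norm (fun N => ?_) hlim
  rw [norm_mul, norm_mul, hcn, norm_div, norm_div, Complex.norm_natCast, norm_one, one_mul,
    one_div, div_eq_mul_inv (2 / _), mul_comm]
  gcongr
  calc ‖z ^ N - 1‖ ≤ ‖z ^ N‖ + ‖(1 : ℂ)‖ := norm_sub_le _ _
    _ = 2 := by rw [norm_pow, hzn]; norm_num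

/-- Weighted chirp cosine-sine cross sum limit: if `β / π` is irrational, the normalized weighted
sum of `cos (α n + β n²) sin (α n + β n²)` tends to `0`. -/
theorem statement_7 (β : ℝ) (hβ : Irrational (β / Real.pi)) (α : ℝ) (k : ℕ) :
    Tendsto (fun N : ℕ =>
        (1 / (N : ℝ) ^ (k + 1)) *
          ∑ n ∈ Finset.Icc 1 N,
            (n : ℝ) ^ k * Real.cos (α * n + β * n ^ 2) * Real.sin (α * n + β * n ^ 2))
      atTop (nhds 0) := by
  have h1 := (weight_aux _ (chirp_aux β hβ α) k).comp_tendsto (tendsto_add_atTop_nat 1)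
  have h2 : ((fun N : ℕ => (N : ℝ) ^ (k + 1)) ∘ fun a => a + 1) =O[atTop]
      (fun N : ℕ => (N : ℝ) ^ (k + 1)) := by
    refine Asymptotics.IsBigO.of_bound (2 ^ (k + 1)) ?_
    filter_upwards [eventually_ge_atTop 1] with N hN
    have : (1 : ℝ) ≤ N := by exact_mod_cast hN
    simp only [Function.comp_apply]
    rw [Real.norm_of_nonneg (by positivity), Real.norm_of_nonneg (by positivity), ← mul_pow]
    gcongr
    push_cast
    linarith
  have h3 := h1.trans_isBigO h2
  have h4 : (fun N : ℕ => ∑ n ∈ Finset.Icc 1 N,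
      (n : ℝ) ^ k * Real.cos (α * n + β * n ^ 2) * Real.sin (α * n + β * n ^ 2)) =o[atTop]
      (fun N : ℕ => (N : ℝ) ^ (k + 1)) := by
    refine Asymptotics.IsBigO.trans_isLittleO (Asymptotics.isBigO_of_le _ fun N => ?_) h3
    have e : ∑ n ∈ Finset.Icc 1 N,
        (n : ℝ) ^ k * Real.cos (α * n + β * n ^ 2) * Real.sin (α * n + β * n ^ 2)
        = (1 / 2) * (∑ n ∈ range (N + 1), (n : ℂ) ^ k *
          Complex.exp (((2 * (α * n + β * n ^ 2) : ℝ) : ℂ) * Complex.I)).im := by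
      have hs : ∀ n : ℕ, (1 / 2) * ((n : ℂ) ^ k *
          Complex.exp (((2 * (α * n + β * n ^ 2) : ℝ) : ℂ) * Complex.I)).im
          = (n : ℝ) ^ k * Real.cos (α * n + β * n ^ 2) * Real.sin (α * n + β * n ^ 2) := by
        intro n
        have hn : (n : ℂ) ^ k = (((n : ℝ) ^ k : ℝ) : ℂ) := by push_cast; rfl
        rw [hn, Complex.im_ofReal_mul, Complex.exp_ofReal_mul_I_im, Real.sin_two_mul]
        ring
      rw [Complex.im_sum, Finset.mul_sum, Finset.sum_congr rfl fun n _ => hs n]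
      refine Finset.sum_subset (fun n hn => ?_) (fun n hn hn' => ?_)
      · simp only [Finset.mem_Icc, Finset.mem_range] at hn ⊢
        omega
      · simp only [Finset.mem_Icc, Finset.mem_range] at hn hn'
        have : n = 0 := by omega
        subst this
        simp
    rw [e, norm_mul]
    simp only [Function.comp_apply]
    refine le_trans ?_ (Complex.abs_im_le_norm _)
    rw [Real.norm_eq_abs, Real.norm_eq_abs]
    have : |(1 / 2 : ℝ)| ≤ 1 := by rw [abs_of_pos] <;> norm_num
    exact mul_le_of_le_one_left (abs_nonneg _) this
  refine h4.tendsto_div_nhds_zero.congr fun N => ?_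
  rw [div_eq_mul_inv, one_div, mul_comm]
end

section
/- Let A, B ∈ ℝ with A² + B² > 0, and set s = A² + B². Then the symmetric 4×4 real matrix M = [[1, 0, B/2, B/3], [0, 1, −A/2, −A/3], [B/2, −A/2, s/3, s/4], [B/3, −A/3, s/4, s/5]] is positive definite. -/
/-- The limiting scaled Hessian of the mono-component chirp least squares criterion is
positive definite. -/
theorem statement_10 (A B : ℝ) (hs : 0 < A ^ 2 + B ^ 2)
    (M : Matrix (Fin 4) (Fin 4) ℝ)
    (hM : M = !![1, 0, B / 2, B / 3;
                 0, 1, -A / 2, -A / 3;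
                 B / 2, -A / 2, (A ^ 2 + B ^ 2) / 3, (A ^ 2 + B ^ 2) / 4;
                 B / 3, -A / 3, (A ^ 2 + B ^ 2) / 4, (A ^ 2 + B ^ 2) / 5]) :
    M.PosDef := by
  subst hM
  refine Matrix.PosDef.of_dotProduct_mulVec_pos ?_ ?_
  · ext i j
    fin_cases i <;> fin_cases j <;> simp
  · intro x hx
    have key : star x ⬝ᵥ (!![1, 0, B / 2, B / 3;
                 0, 1, -A / 2, -A / 3;
                 B / 2, -A / 2, (A ^ 2 + B ^ 2) / 3, (A ^ 2 + B ^ 2) / 4;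
                 B / 3, -A / 3, (A ^ 2 + B ^ 2) / 4, (A ^ 2 + B ^ 2) / 5].mulVec x) =
        (x 0 + B * (x 2 / 2 + x 3 / 3)) ^ 2 + (x 1 - A * (x 2 / 2 + x 3 / 3)) ^ 2
        + ((A ^ 2 + B ^ 2) * ((x 2 + x 3) ^ 2 / 12) + (A ^ 2 + B ^ 2) * (x 3 ^ 2 / 180)) := by
      simp [dotProduct, Matrix.mulVec, Fin.sum_univ_four]
      ring
    rw [key]
    by_contra hneg
    apply hx
    have h1 := sq_nonneg (x 0 + B * (x 2 / 2 + x 3 / 3))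
    have h2 := sq_nonneg (x 1 - A * (x 2 / 2 + x 3 / 3))
    have h3 : 0 ≤ (A ^ 2 + B ^ 2) * ((x 2 + x 3) ^ 2 / 12) := by positivity
    have h4 : 0 ≤ (A ^ 2 + B ^ 2) * (x 3 ^ 2 / 180) := by positivity
    have e4 : (A ^ 2 + B ^ 2) * (x 3 ^ 2 / 180) = 0 := by linarith
    have e3 : (A ^ 2 + B ^ 2) * ((x 2 + x 3) ^ 2 / 12) = 0 := by linarith
    have e2 : (x 1 - A * (x 2 / 2 + x 3 / 3)) ^ 2 = 0 := by linarith
    have e1 : (x 0 + B * (x 2 / 2 + x 3 / 3)) ^ 2 = 0 := by linarith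
    have x3 : x 3 = 0 := by
      have := (mul_eq_zero.mp e4).resolve_left hs.ne'
      exact pow_eq_zero_iff (two_ne_zero) |>.mp (by linarith)
    have x2 : x 2 = 0 := by
      have := (mul_eq_zero.mp e3).resolve_left hs.ne'
      have : x 2 + x 3 = 0 := pow_eq_zero_iff (two_ne_zero) |>.mp (by linarith)
      linarith
    have x1 : x 1 = 0 := by simpa [x2, x3] using e2
    have x0 : x 0 = 0 := by simpa [x2, x3] using e1
    ext i
    fin_cases i <;> simp [x0, x1, x2, x3]
end

section
/- Let p ≥ 1 and let s : {1,…,p} → ℝ with s_k > 0 for all k. Then the symmetric (p+1)×(p+1) real matrix S with S_{kk} = s_k/12 and S_{k,p+1} = S_{p+1,k} = s_k/12 for k ≤ p, S_{p+1,p+1} = (4/45) Σ_{k=1}^{p} s_k, and S_{kj} = 0 for distinct k, j ≤ p, is positive definite. -/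
open Finset

/-- The Schur complement `S` appearing in the limiting covariance matrix of the scaled gradient
of the least squares criterion for the `p`-component equal-chirp-rate model is positive
definite. -/
theorem statement_14 (p : ℕ) (hp : 1 ≤ p) (s : ℕ → ℝ) (hs : ∀ k, 0 < s k)
    (S : Matrix (Fin (p + 1)) (Fin (p + 1)) ℝ)
    (hS : ∀ i j, S i j =
      if i.val = j.val then
        (if i.val < p then s i.val / 12 else 4 / 45 * ∑ k ∈ Finset.range p, s k)
      else if j.val = p then s i.val / 12
      else if i.val = p then s j.val / 12
      else 0) :
    S.PosDef := by
  have hcc : ∀ i j : Fin p, S i.castSucc j.castSucc = if i = j then s i / 12 else 0 := by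
    intro i j
    have h1 := i.isLt
    have h2 := j.isLt
    rw [hS]
    simp [h1, h1.ne, h2.ne, Fin.ext_iff]
  have hcl : ∀ i : Fin p, S i.castSucc (Fin.last p) = s i / 12 := by
    intro i
    rw [hS]
    simp [i.isLt.ne]
  have hlc : ∀ i : Fin p, S (Fin.last p) i.castSucc = s i / 12 := by
    intro i
    rw [hS]
    simp [i.isLt.ne, i.isLt.ne']
  have hll : S (Fin.last p) (Fin.last p) = 4 / 45 * ∑ k : Fin p, s k := by
    rw [hS, Fin.sum_univ_eq_sum_range]
    simp
  apply Matrix.PosDef.of_dotProduct_mulVec_pos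
  · ext i j
    rw [Matrix.conjTranspose_apply, star_trivial]
    refine Fin.lastCases ?_ (fun i => ?_) i <;> refine Fin.lastCases ?_ (fun j => ?_) j
    · rfl
    · rw [hcl, hlc]
    · rw [hcl, hlc]
    · rw [hcc, hcc]
      by_cases h : i = j
      · simp [h]
      · simp [h, Ne.symm h]
  · intro x hx
    have key : star x ⬝ᵥ (S.mulVec x) = ∑ k : Fin p, s k *
        ((x k.castSucc + x (Fin.last p)) ^ 2 / 12 + x (Fin.last p) ^ 2 / 180) := by
      simp only [dotProduct, Matrix.mulVec, star_trivial, Pi.star_apply, Fin.sum_univ_castSucc,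
        hcc, hcl, hlc, hll, ite_mul, zero_mul, Finset.sum_ite_eq, Finset.mem_univ, if_true]
      rw [mul_add, Finset.mul_sum, Finset.mul_sum, Finset.sum_mul, Finset.mul_sum,
        ← Finset.sum_add_distrib, ← Finset.sum_add_distrib]
      refine Finset.sum_congr rfl fun k _ => ?_
      ring
    rw [key]
    have hnn : ∀ k ∈ (Finset.univ : Finset (Fin p)), 0 ≤ s k *
        ((x k.castSucc + x (Fin.last p)) ^ 2 / 12 + x (Fin.last p) ^ 2 / 180) := by
      intro k _
      have := hs k
      positivity
    refine lt_of_le_of_ne (Finset.sum_nonneg hnn) fun h0 => hx ?_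
    have hz := (Finset.sum_eq_zero_iff_of_nonneg hnn).1 h0.symm
    have hz' : ∀ k : Fin p, x (Fin.last p) = 0 ∧ x k.castSucc = 0 := by
      intro k
      have h := (mul_eq_zero.1 (hz k (Finset.mem_univ k))).resolve_left (hs k).ne'
      have hy : x (Fin.last p) = 0 := by
        rw [← sq_eq_zero_iff]
        nlinarith [sq_nonneg (x k.castSucc + x (Fin.last p)), sq_nonneg (x (Fin.last p))]
      rw [hy] at h
      refine ⟨hy, ?_⟩
      rw [← sq_eq_zero_iff]
      linarith
    funext i
    refine Fin.lastCases ?_ (fun k => ?_) i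
    · exact (hz' ⟨0, hp⟩).1
    · exact (hz' k).2
end
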